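/- For n ≥ 2 let U_n(t) = ∑ t^{des(π)} over permutations π of length n avoiding the consecutive pattern 1̲3̲2 with π₁ < π₂, and V_n(t) = ∑ t^{des(π)} over permutations π of length n avoiding 1̲3̲2 with π₁ > π₂ (and U_0 = U_1 = V_0 = V_1 = 0). Then for all n ≥ 3: U_{n+1}(t) = (1+t)·U_n(t) + t·n·U_{n−1}(t) + t·∑_{i=2}^{n−2} binom(n,i)·U_i(t)·U_{n−i}(t), and V_{n+1}(t) = t·V_n(t) + t·n·V_{n−1}(t) + t·∑_{i=2}^{n−2} binom(n,i)·V_i(t)·U_{n−i}(t) + t·n·U_{n−1}(t); moreover, for all n ≥ 2, ∑_{π ∈ S_n(1̲3̲2)} t^{des(π)} = U_n(t) + V_n(t). -/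

import Mathlib

open scoped Classical

/-- The number of descents of a permutation of `Fin n` (one-line notation `π 0, π 1, …`). -/
def des {n : ℕ} (π : Equiv.Perm (Fin n)) : ℕ :=
  (Finset.univ.filter fun i : Fin n =>
    ∃ h : (i : ℕ) + 1 < n, π ⟨(i : ℕ) + 1, h⟩ < π i).card

/-- `π` avoids the consecutive pattern 1̲3̲2: there is no (0-indexed) position `i` with
`i + 2 < n` such that `π_i < π_{i+2} < π_{i+1}`. -/
def AvoidsC132 {n : ℕ} (π : Equiv.Perm (Fin n)) : Prop :=
  ¬ ∃ (i : ℕ) (h : i + 2 < n),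
      π ⟨i, by omega⟩ < π ⟨i + 2, h⟩ ∧ π ⟨i + 2, h⟩ < π ⟨i + 1, by omega⟩

/-- `U_n(t) = ∑ t^{des(π)}` over 1̲3̲2-avoiding permutations of length `n` with
`π₁ < π₂` (so `U_0 = U_1 = 0`). -/
noncomputable def U (n : ℕ) : Polynomial ℚ :=
  ∑ π ∈ Finset.univ.filter (fun π : Equiv.Perm (Fin n) =>
      AvoidsC132 π ∧ ∃ h : 1 < n, π ⟨0, by omega⟩ < π ⟨1, h⟩),
    Polynomial.X ^ des π

/-- `V_n(t) = ∑ t^{des(π)}` over 1̲3̲2-avoiding permutations of length `n` with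
`π₁ > π₂` (so `V_0 = V_1 = 0`). -/
noncomputable def V (n : ℕ) : Polynomial ℚ :=
  ∑ π ∈ Finset.univ.filter (fun π : Equiv.Perm (Fin n) =>
      AvoidsC132 π ∧ ∃ h : 1 < n, π ⟨1, h⟩ < π ⟨0, by omega⟩),
    Polynomial.X ^ des π

/-!
Split a word with distinct letters at its minimal letter `m` as `s ++ m :: t`. It avoids the
pattern iff `s` and `t` do and `t` does not begin with a descent, since `m` can only play the
role of the `1` in an occurrence of the pattern, and its descents are those of `s` and of `t`
together with the one into `m` when `s` is nonempty. With `T n` enumerating all avoiders and `A n`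
those not beginning with a descent (so `A n = U n` for `n ≥ 2`, but `A 0 = A 1 = 1`), this gives
`T (n + 1) = A n + t * ∑ i ∈ [1, n], C(n, i) * T i * A (n - i)`. The same sum with `A i` in place
of `T i` and without the term `i = 1` is `A (n + 1)`, because a one-letter prefix `s` makes the
word begin with a descent. The recurrence for `V` is the difference of the two, as
`T n = U n + V n` for `n ≥ 2`.
-/
section Words

variable {α β : Type*}

/-- The words using every element of `S` as a letter exactly once. -/
def words (S : Finset α) : Finset (List α) :=
  ⟨S.val.lists, Multiset.lists_nodup_finset S⟩

theorem mem_words {S : Finset α} {l : List α} :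
    l ∈ words S ↔ l.Nodup ∧ ∀ a, a ∈ l ↔ a ∈ S := by
  rw [words, Finset.mem_mk, Multiset.mem_lists_iff, Multiset.quot_mk_to_coe]
  refine ⟨fun h => ⟨?_, fun a => ?_⟩, fun ⟨hnodup, hmem⟩ => ?_⟩
  · exact Multiset.coe_nodup.1 (h ▸ S.nodup)
  · rw [← Finset.mem_val, h, Multiset.mem_coe]
  · exact (S.nodup.ext (Multiset.coe_nodup.2 hnodup)).2 fun a => (hmem a).symm

theorem length_eq_card_of_mem_words {S : Finset α} {l : List α} (hl : l ∈ words S) :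
    l.length = S.card := by
  have h := (Multiset.mem_lists_iff _ _).1 hl
  rw [Finset.card, h, Multiset.quot_mk_to_coe, Multiset.coe_card]

theorem words_empty : words (∅ : Finset α) = {[]} := by
  ext l
  simp +contextual [mem_words, ← List.eq_nil_iff_forall_not_mem]

theorem words_map (f : α ↪ β) (S : Finset α) :
    words (S.map f) = (words S).map ⟨List.map f, List.map_injective_iff.2 f.injective⟩ := by
  ext l
  simp only [Finset.mem_map, Function.Embedding.coeFn_mk]
  constructor
  · intro hl
    obtain ⟨hnodup, hmem⟩ := mem_words.1 hl
    have hrange : l ∈ Set.range (List.map f) := by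
      rw [Set.range_list_map]
      intro b hb
      obtain ⟨a, -, rfl⟩ := Finset.mem_map.1 ((hmem b).1 hb)
      exact ⟨a, rfl⟩
    obtain ⟨k, rfl⟩ := hrange
    exact ⟨k, mem_words.2 ⟨hnodup.of_map, fun a => by simpa using hmem (f a)⟩, rfl⟩
  · rintro ⟨k, hk, rfl⟩
    obtain ⟨hnodup, hmem⟩ := mem_words.1 hk
    exact mem_words.2 ⟨hnodup.map f.injective, fun b => by simp [hmem]⟩

theorem append_cons_mem_words [DecidableEq α] {S A : Finset α} {m : α} (hm : m ∉ S) (hA : A ⊆ S)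
    {s t : List α} (hs : s ∈ words A) (ht : t ∈ words (S \ A)) :
    s ++ m :: t ∈ words (insert m S) := by
  rw [mem_words] at *
  grind [List.nodup_middle, List.nodup_append]

theorem exists_of_mem_words_insert [DecidableEq α] {S : Finset α} {m : α} (hm : m ∉ S)
    {l : List α} (hl : l ∈ words (insert m S)) :
    ∃ A ⊆ S, ∃ s ∈ words A, ∃ t ∈ words (S \ A), s ++ m :: t = l := by
  obtain ⟨hnodup, hmem⟩ := mem_words.1 hl
  obtain ⟨s, t, rfl⟩ := List.append_of_mem ((hmem m).2 (Finset.mem_insert_self m S))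
  rw [List.nodup_append, List.nodup_cons] at hnodup
  simp only [List.mem_append, List.mem_cons, Finset.mem_insert] at hmem
  refine ⟨s.toFinset, ?_, s, mem_words.2 ?_, t, mem_words.2 ?_, rfl⟩ <;>
    grind [List.mem_toFinset]

theorem sum_words_insert [DecidableEq α] {M : Type*} [AddCommMonoid M] {S : Finset α} {m : α}
    (hm : m ∉ S) (f : List α → M) :
    ∑ l ∈ words (insert m S), f l =
      ∑ A ∈ S.powerset, ∑ s ∈ words A, ∑ t ∈ words (S \ A), f (s ++ m :: t) := by
  simp only [← Finset.sum_product', Finset.sum_sigma']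
  symm
  refine Finset.sum_bij (fun p _ => p.2.1 ++ m :: p.2.2) ?_ ?_ ?_ fun _ _ => rfl
  · rintro ⟨A, s, t⟩ hp
    simp only [Finset.mem_sigma, Finset.mem_powerset, Finset.mem_product] at hp
    exact append_cons_mem_words hm hp.1 hp.2.1 hp.2.2
  · rintro ⟨A, s, t⟩ hp ⟨A', s', t'⟩ hp' heq
    simp only [Finset.mem_sigma, Finset.mem_powerset, Finset.mem_product, mem_words] at hp hp'
    have hms : m ∉ s := fun h => hm (hp.1 ((hp.2.1.2 m).1 h))
    have hmt : m ∉ t := fun h => hm (Finset.mem_sdiff.1 ((hp.2.2.2 m).1 h)).1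
    obtain ⟨rfl, -, rfl⟩ := (List.append_cons_inj_of_notMem hms hmt).1 heq
    obtain rfl : A = A' := Finset.ext fun a => (hp.2.1.2 a).symm.trans (hp'.2.1.2 a)
    rfl
  · intro l hl
    obtain ⟨A, hA, s, hs, t, ht, rfl⟩ := exists_of_mem_words_insert hm hl
    exact ⟨⟨A, s, t⟩, by simp [hA, hs, ht], rfl⟩

theorem ofFn_perm_mem_words {n : ℕ} (π : Equiv.Perm (Fin n)) :
    List.ofFn π ∈ words Finset.univ :=
  mem_words.2 ⟨List.nodup_ofFn.2 π.injective, fun a => by simp [List.mem_ofFn, π.surjective a]⟩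

theorem exists_ofFn_perm_eq {n : ℕ} {l : List (Fin n)} (hl : l ∈ words Finset.univ) :
    ∃ π : Equiv.Perm (Fin n), List.ofFn π = l := by
  obtain ⟨hnodup, hmem⟩ := mem_words.1 hl
  have hlen : l.length = n := (length_eq_card_of_mem_words hl).trans (Finset.card_fin n)
  let e : Fin l.length ≃ Fin n :=
    hnodup.getEquivOfForallMemList l fun a => (hmem a).2 (Finset.mem_univ a)
  refine ⟨(finCongr hlen.symm).trans e, List.ext_getElem (by simp [hlen]) fun i _ _ => ?_⟩
  simp [e]

theorem sum_words_univ {M : Type*} [AddCommMonoid M] {n : ℕ} (f : List (Fin n) → M) :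
    ∑ l ∈ words Finset.univ, f l = ∑ π : Equiv.Perm (Fin n), f (List.ofFn π) := by
  symm
  refine Finset.sum_bij (fun π _ => List.ofFn π) (fun π _ => ofFn_perm_mem_words π) ?_ ?_
    fun _ _ => rfl
  · exact fun π _ σ _ h => DFunLike.coe_injective (List.ofFn_injective h)
  · intro l hl
    obtain ⟨π, hπ⟩ := exists_ofFn_perm_eq hl
    exact ⟨π, Finset.mem_univ π, hπ⟩

end Words

section WordStatistics

variable {α β : Type*} [LinearOrder α] [LinearOrder β]

/-- The number of descents of a word. -/
def wordDes : List α → ℕ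
  | a :: b :: l => (if b < a then 1 else 0) + wordDes (b :: l)
  | _ => 0

/-- The word has no three consecutive letters `a`, `b`, `c` with `a < c < b`. -/
def WordAvoidsC132 : List α → Prop
  | a :: b :: c :: l => ¬(a < c ∧ c < b) ∧ WordAvoidsC132 (b :: c :: l)
  | _ => True

/-- The word has at least two letters and its first letter exceeds its second. -/
def InitialDescent : List α → Prop
  | a :: b :: _ => b < a
  | _ => False

theorem wordDes_map (f : α ↪o β) (l : List α) : wordDes (l.map f) = wordDes l := by
  induction l using wordDes.induct with
  | case1 a b l ih => simpa [wordDes] using ih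
  | case2 l h => rcases l with _ | ⟨a, _ | ⟨b, l⟩⟩ <;> simp_all [wordDes]

theorem wordAvoidsC132_map (f : α ↪o β) (l : List α) :
    WordAvoidsC132 (l.map f) ↔ WordAvoidsC132 l := by
  induction l with
  | nil => rfl
  | cons a l ih =>
    rcases l with _ | ⟨b, _ | ⟨c, l⟩⟩
    · rfl
    · rfl
    · simpa [WordAvoidsC132] using fun _ => ih

theorem initialDescent_map (f : α ↪o β) (l : List α) :
    InitialDescent (l.map f) ↔ InitialDescent l := by
  rcases l with _ | ⟨a, _ | ⟨b, l⟩⟩ <;> simp [InitialDescent]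

theorem wordDes_cons_of_forall_lt {m : α} {t : List α} (ht : ∀ a ∈ t, m < a) :
    wordDes (m :: t) = wordDes t := by
  cases t with
  | nil => rfl
  | cons b t => simp [wordDes, (ht b List.mem_cons_self).not_gt]

theorem wordDes_append_cons {m : α} {s t : List α} (hs : ∀ a ∈ s, m < a) (ht : ∀ a ∈ t, m < a) :
    wordDes (s ++ m :: t) = wordDes s + wordDes t + if s = [] then 0 else 1 := by
  induction s using wordDes.induct with
  | case1 a b s ih => grind [wordDes]
  | case2 s h =>
    rcases s with _ | ⟨a, _ | ⟨b, s⟩⟩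
    · simp [wordDes_cons_of_forall_lt ht, wordDes]
    · simp [wordDes, wordDes_cons_of_forall_lt ht, hs a List.mem_cons_self, add_comm]
    · exact (h a b s rfl).elim

theorem wordAvoidsC132_cons_of_forall_lt {m : α} {t : List α} (ht : ∀ a ∈ t, m < a) :
    WordAvoidsC132 (m :: t) ↔ WordAvoidsC132 t ∧ ¬InitialDescent t := by
  rcases t with _ | ⟨b, _ | ⟨c, t⟩⟩
  · simp [WordAvoidsC132, InitialDescent]
  · simp [WordAvoidsC132, InitialDescent]
  · simp [WordAvoidsC132, InitialDescent, ht c, and_comm]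

theorem wordAvoidsC132_append_cons {m : α} {s t : List α} (hs : ∀ a ∈ s, m < a)
    (ht : ∀ a ∈ t, m < a) :
    WordAvoidsC132 (s ++ m :: t) ↔ WordAvoidsC132 s ∧ WordAvoidsC132 t ∧ ¬InitialDescent t := by
  rw [← wordAvoidsC132_cons_of_forall_lt ht]
  induction s with
  | nil => simp [WordAvoidsC132]
  | cons a s ih =>
    rcases s with _ | ⟨b, _ | ⟨c, s⟩⟩
    · cases t with
      | nil => simp [WordAvoidsC132]
      | cons b t => simp [WordAvoidsC132, (ht b List.mem_cons_self).not_gt]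
    · simpa [WordAvoidsC132, (hs a List.mem_cons_self).not_gt] using
        ih fun x hx => hs x (List.mem_cons_of_mem a hx)
    · simp_all [WordAvoidsC132, and_assoc]

theorem initialDescent_append_cons {m : α} {s t : List α} (hs : ∀ a ∈ s, m < a)
    (ht : ∀ a ∈ t, m < a) :
    InitialDescent (s ++ m :: t) ↔ s.length = 1 ∨ InitialDescent s := by
  rcases s with _ | ⟨a, _ | ⟨b, s⟩⟩
  · cases t with
    | nil => simp [InitialDescent]
    | cons b t => simp [InitialDescent, (ht b List.mem_cons_self).le]
  · simp [InitialDescent, hs a List.mem_cons_self]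
  · simp [InitialDescent]

theorem wordDes_eq_card (l : List α) :
    wordDes l = (Finset.univ.filter fun i : Fin l.length =>
      ∃ h : (i : ℕ) + 1 < l.length, l[(i : ℕ) + 1] < l[i]).card := by
  induction l using wordDes.induct with
  | case1 a b l ih =>
    refine Eq.trans ?_ (Fin.card_filter_univ_succ' (n := (b :: l).length) _).symm
    rw [wordDes, ih]
    simp
  | case2 l h => rcases l with _ | ⟨a, _ | ⟨b, l⟩⟩ <;> simp_all [wordDes]

theorem wordAvoidsC132_iff (l : List α) :
    WordAvoidsC132 l ↔
      ¬∃ (i : ℕ) (h : i + 2 < l.length), l[i] < l[i + 2] ∧ l[i + 2] < l[i + 1] := by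
  induction l with
  | nil => simp [WordAvoidsC132]
  | cons a l ih =>
    rcases l with _ | ⟨b, _ | ⟨c, l⟩⟩
    · simp [WordAvoidsC132]
    · simp [WordAvoidsC132]
    · rw [WordAvoidsC132, ih, ← not_or, not_iff_not]
      conv_rhs => rw [← Nat.or_exists_add_one]
      simp

theorem wordDes_ofFn {n : ℕ} (π : Equiv.Perm (Fin n)) : wordDes (List.ofFn π) = des π := by
  rw [wordDes_eq_card, des]
  refine Finset.card_equiv (finCongr (List.length_ofFn (f := π))) fun i => ?_
  simp [Fin.cast]

theorem wordAvoidsC132_ofFn {n : ℕ} (π : Equiv.Perm (Fin n)) :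
    WordAvoidsC132 (List.ofFn π) ↔ AvoidsC132 π := by
  simp [wordAvoidsC132_iff, AvoidsC132]

theorem not_initialDescent_ofFn {n : ℕ} (hn : 2 ≤ n) (π : Equiv.Perm (Fin n)) :
    ¬InitialDescent (List.ofFn π) ↔ ∃ h : 1 < n, π ⟨0, by omega⟩ < π ⟨1, h⟩ := by
  obtain ⟨n, rfl⟩ := Nat.exists_eq_add_of_le' hn
  have hne : π 0 ≠ π 1 := by simp
  simp [InitialDescent, List.ofFn_succ, hne.le_iff_lt]

end WordStatistics

section GeneratingFunctions

variable {α β R : Type*} [LinearOrder α] [LinearOrder β] [CommSemiring R]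

/-- The descent enumerator, evaluated at `x`, of the words on `S` that satisfy `P`. -/
noncomputable def descentSum (x : R) (P : List α → Prop) (S : Finset α) : R :=
  ∑ l ∈ words S with P l, x ^ wordDes l

/-- The descent enumerator of the C132-avoiding words on an `n`-element alphabet. -/
noncomputable def avoiderSum (x : R) (n : ℕ) : R :=
  descentSum x WordAvoidsC132 (Finset.univ : Finset (Fin n))

/-- The descent enumerator of the C132-avoiding words on an `n`-element alphabet that do not begin
with a descent. Words of length at most one are included, so this differs from `U n` for
`n ≤ 1`. -/
noncomputable def ascentAvoiderSum (x : R) (n : ℕ) : R :=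
  descentSum x (fun l => WordAvoidsC132 l ∧ ¬InitialDescent l) (Finset.univ : Finset (Fin n))

theorem descentSum_map (x : R) (f : α ↪o β) (P : List β → Prop) (S : Finset α) :
    descentSum x P (S.map f.toEmbedding) = descentSum x (fun l => P (l.map f)) S := by
  simp [descentSum, words_map, Finset.sum_filter, wordDes_map]

theorem descentSum_wordAvoidsC132 (x : R) (S : Finset α) :
    descentSum x WordAvoidsC132 S = avoiderSum x S.card := by
  conv_lhs => rw [← S.map_orderEmbOfFin_univ rfl, descentSum_map]
  simp only [wordAvoidsC132_map, avoiderSum]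

theorem descentSum_wordAvoidsC132_and_not_initialDescent (x : R) (S : Finset α) :
    descentSum x (fun l => WordAvoidsC132 l ∧ ¬InitialDescent l) S =
      ascentAvoiderSum x S.card := by
  conv_lhs => rw [← S.map_orderEmbOfFin_univ rfl, descentSum_map]
  simp only [wordAvoidsC132_map, initialDescent_map, ascentAvoiderSum]

theorem descentSum_length_ne_one_and (x : R) (P : List α → Prop) (S : Finset α) :
    descentSum x (fun l => l.length ≠ 1 ∧ P l) S =
      if S.card = 1 then 0 else descentSum x P S := by
  simp only [descentSum, Finset.sum_filter]
  split_ifs with hS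
  · exact Finset.sum_eq_zero fun l hl => if_neg (by simp [length_eq_card_of_mem_words hl, hS])
  · exact Finset.sum_congr rfl fun l hl => by simp [length_eq_card_of_mem_words hl, hS]

theorem descentSum_empty {x : R} {P : List α → Prop} (hP : P []) :
    descentSum x P (∅ : Finset α) = 1 := by
  simp [descentSum, words_empty, Finset.filter_singleton, hP, wordDes]

theorem avoiderSum_zero (x : R) : avoiderSum x 0 = 1 :=
  descentSum_empty trivial

theorem ascentAvoiderSum_zero (x : R) : ascentAvoiderSum x 0 = 1 :=
  descentSum_empty ⟨trivial, not_false⟩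

/-- Splitting a word at its minimal letter `m` creates a descent into `m` unless `m` comes
first. -/
theorem descentSum_insert {x : R} {m : α} {S : Finset α} (hm : ∀ a ∈ S, m < a)
    {P P₁ P₂ : List α → Prop}
    (hP : ∀ s t : List α, (∀ a ∈ s, m < a) → (∀ a ∈ t, m < a) →
      (P (s ++ m :: t) ↔ P₁ s ∧ P₂ t)) :
    descentSum x P (insert m S) =
      ∑ A ∈ S.powerset,
        (if A = ∅ then 1 else x) * (descentSum x P₁ A * descentSum x P₂ (S \ A)) := by
  simp only [descentSum, Finset.sum_filter]
  rw [sum_words_insert fun h => (hm m h).false]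
  refine Finset.sum_congr rfl fun A hA => ?_
  rw [Finset.sum_mul_sum]
  simp only [Finset.mul_sum]
  refine Finset.sum_congr rfl fun s hs => Finset.sum_congr rfl fun t ht => ?_
  have hsm : ∀ a ∈ s, m < a := fun a ha =>
    hm a (Finset.mem_powerset.1 hA (((mem_words.1 hs).2 a).1 ha))
  have htm : ∀ a ∈ t, m < a := fun a ha =>
    hm a (Finset.mem_sdiff.1 (((mem_words.1 ht).2 a).1 ha)).1
  have hnil : s = [] ↔ A = ∅ := by
    rw [← List.length_eq_zero_iff, length_eq_card_of_mem_words hs, Finset.card_eq_zero]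
  simp only [hP s t hsm htm, wordDes_append_cons hsm htm, hnil]
  by_cases h₁ : P₁ s <;> by_cases h₂ : P₂ t <;> by_cases hA : A = ∅ <;>
    simp [h₁, h₂, hA, pow_add, mul_comm]

theorem sum_range_succ_eq_add_add_sum_Icc_two {M : Type*} [AddCommMonoid M] {f : ℕ → M} {n : ℕ}
    (hf : n = 0 → f 1 = 0) :
    ∑ i ∈ Finset.range (n + 1), f i = f 0 + f 1 + ∑ i ∈ Finset.Icc 2 n, f i := by
  obtain rfl | hn := n.eq_zero_or_pos
  · simp [hf rfl]
  · rw [← Finset.sum_range_add_sum_Ico f (by omega : 2 ≤ n + 1), Finset.sum_range_succ,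
      Finset.sum_range_one]
    rfl

theorem descentSum_univ_succ {x : R} {n : ℕ} {P P₁ P₂ : List (Fin (n + 1)) → Prop}
    (hP : ∀ s t : List (Fin (n + 1)), (∀ a ∈ s, 0 < a) → (∀ a ∈ t, 0 < a) →
      (P (s ++ 0 :: t) ↔ P₁ s ∧ P₂ t))
    {p₁ p₂ : ℕ → R} (hp₁ : ∀ A, descentSum x P₁ A = p₁ A.card)
    (hp₂ : ∀ A, descentSum x P₂ A = p₂ A.card) :
    descentSum x P Finset.univ = p₁ 0 * p₂ n + x * n * p₁ 1 * p₂ (n - 1) +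
      x * ∑ i ∈ Finset.Icc 2 n, n.choose i * p₁ i * p₂ (n - i) := by
  have hcard : (Finset.univ.erase (0 : Fin (n + 1))).card = n := by simp
  have hsummand : ∀ A ∈ (Finset.univ.erase (0 : Fin (n + 1))).powerset,
      (if A = ∅ then 1 else x) *
        (descentSum x P₁ A * descentSum x P₂ (Finset.univ.erase 0 \ A)) =
      (if A.card = 0 then 1 else x) * (p₁ A.card * p₂ (n - A.card)) := by
    intro A hA
    rw [hp₁, hp₂, Finset.card_sdiff_of_subset (Finset.mem_powerset.1 hA), hcard]
    simp only [Finset.card_eq_zero]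
  rw [← Finset.insert_erase (Finset.mem_univ (0 : Fin (n + 1))),
    descentSum_insert (by simp [Fin.pos_iff_ne_zero]) hP, Finset.sum_congr rfl hsummand,
    Finset.sum_powerset_apply_card fun i => (if i = 0 then 1 else x) * (p₁ i * p₂ (n - i)), hcard,
    sum_range_succ_eq_add_add_sum_Icc_two (by rintro rfl; simp), Finset.mul_sum]
  congr 1
  · simp only [Nat.choose_zero_right, Nat.choose_one_right, one_smul, nsmul_eq_mul, if_true,
      one_ne_zero, if_false, one_mul, Nat.sub_zero]
    ring
  · refine Finset.sum_congr rfl fun i hi => ?_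
    rw [if_neg (by grind), nsmul_eq_mul]
    ring

theorem avoiderSum_succ (x : R) (n : ℕ) :
    avoiderSum x (n + 1) = ascentAvoiderSum x n +
      x * n * avoiderSum x 1 * ascentAvoiderSum x (n - 1) +
      x * ∑ i ∈ Finset.Icc 2 n, n.choose i * avoiderSum x i * ascentAvoiderSum x (n - i) := by
  rw [avoiderSum, descentSum_univ_succ (fun s t => wordAvoidsC132_append_cons)
    (descentSum_wordAvoidsC132 x) (descentSum_wordAvoidsC132_and_not_initialDescent x),
    avoiderSum_zero, one_mul]

theorem ascentAvoiderSum_succ (x : R) (n : ℕ) :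
    ascentAvoiderSum x (n + 1) = ascentAvoiderSum x n +
      x * ∑ i ∈ Finset.Icc 2 n, n.choose i * ascentAvoiderSum x i * ascentAvoiderSum x (n - i) := by
  have hsplit : ∀ s t : List (Fin (n + 1)), (∀ a ∈ s, 0 < a) → (∀ a ∈ t, 0 < a) →
      (WordAvoidsC132 (s ++ 0 :: t) ∧ ¬InitialDescent (s ++ 0 :: t) ↔
        (s.length ≠ 1 ∧ WordAvoidsC132 s ∧ ¬InitialDescent s) ∧
          WordAvoidsC132 t ∧ ¬InitialDescent t) := by
    intro s t hs ht
    rw [wordAvoidsC132_append_cons hs ht, initialDescent_append_cons hs ht]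
    tauto
  have hprefix : ∀ A : Finset (Fin (n + 1)),
      descentSum x (fun s => s.length ≠ 1 ∧ WordAvoidsC132 s ∧ ¬InitialDescent s) A =
        if A.card = 1 then 0 else ascentAvoiderSum x A.card := by
    intro A
    rw [descentSum_length_ne_one_and, descentSum_wordAvoidsC132_and_not_initialDescent]
  have hsum : ∀ i ∈ Finset.Icc 2 n, (n.choose i * (if i = 1 then 0 else ascentAvoiderSum x i) *
      ascentAvoiderSum x (n - i) : R) =
        n.choose i * ascentAvoiderSum x i * ascentAvoiderSum x (n - i) := by
    intro i hi
    rw [if_neg (by grind)]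
  rw [ascentAvoiderSum, descentSum_univ_succ hsplit (p₁ := fun i => if i = 1 then 0 else _) hprefix
    (descentSum_wordAvoidsC132_and_not_initialDescent x), Finset.sum_congr rfl hsum]
  simp [ascentAvoiderSum_zero]

theorem avoiderSum_one (x : R) : avoiderSum x 1 = 1 := by
  simpa [ascentAvoiderSum_zero] using avoiderSum_succ x 0

theorem ascentAvoiderSum_one (x : R) : ascentAvoiderSum x 1 = 1 := by
  simpa [ascentAvoiderSum_zero] using ascentAvoiderSum_succ x 0

theorem descentSum_univ (x : R) {n : ℕ} (P : List (Fin n) → Prop) :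
    descentSum x P Finset.univ =
      ∑ π ∈ Finset.univ.filter (fun π : Equiv.Perm (Fin n) => P (List.ofFn π)), x ^ des π := by
  simp only [descentSum, Finset.sum_filter, sum_words_univ, wordDes_ofFn]

end GeneratingFunctions

section Recurrences

open Polynomial

theorem U_eq_ascentAvoiderSum {n : ℕ} (hn : 2 ≤ n) : U n = ascentAvoiderSum X n := by
  rw [ascentAvoiderSum, descentSum_univ]
  simp only [U, wordAvoidsC132_ofFn, not_initialDescent_ofFn hn]

theorem sum_avoidsC132_eq_avoiderSum (n : ℕ) :
    ∑ π ∈ Finset.univ.filter (fun π : Equiv.Perm (Fin n) => AvoidsC132 π), (X : ℚ[X]) ^ des π =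
      avoiderSum X n := by
  rw [avoiderSum, descentSum_univ]
  simp only [wordAvoidsC132_ofFn]

theorem sum_avoidsC132_eq_U_add_V {n : ℕ} (hn : 2 ≤ n) :
    ∑ π ∈ Finset.univ.filter (fun π : Equiv.Perm (Fin n) => AvoidsC132 π), (X : ℚ[X]) ^ des π =
      U n + V n := by
  have hV : ∀ π : Equiv.Perm (Fin n),
      (∃ h : 1 < n, π ⟨1, h⟩ < π ⟨0, by omega⟩) ↔ ¬∃ h : 1 < n, π ⟨0, by omega⟩ < π ⟨1, h⟩ := by
    intro π
    have hne : π ⟨0, by omega⟩ ≠ π ⟨1, hn⟩ := by simp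
    simp [show 1 < n from hn, hne.symm.le_iff_lt]
  simp only [U, V, hV, ← Finset.filter_filter]
  exact (Finset.sum_filter_add_sum_filter_not _ _ _).symm

theorem sum_Icc_two_eq_add_add {M : Type*} [AddCommMonoid M] (f : ℕ → M) {n : ℕ} (hn : 3 ≤ n) :
    ∑ i ∈ Finset.Icc 2 n, f i = ∑ i ∈ Finset.Icc 2 (n - 2), f i + f (n - 1) + f n := by
  obtain ⟨k, rfl⟩ := Nat.exists_eq_add_of_le' hn
  rw [Finset.sum_Icc_succ_top (by omega), Finset.sum_Icc_succ_top (by omega)]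
  rfl

theorem sum_choose_mul_ascentAvoiderSum {n : ℕ} (hn : 3 ≤ n) (f : ℕ → ℚ[X]) :
    ∑ i ∈ Finset.Icc 2 n, (n.choose i : ℚ[X]) * f i * ascentAvoiderSum X (n - i) =
      ∑ i ∈ Finset.Icc 2 (n - 2), (n.choose i : ℚ[X]) * f i * U (n - i) +
        (n : ℚ[X]) * f (n - 1) + f n := by
  have hsum : ∀ i ∈ Finset.Icc 2 (n - 2), (n.choose i : ℚ[X]) * f i * ascentAvoiderSum X (n - i) =
      (n.choose i : ℚ[X]) * f i * U (n - i) := by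
    intro i hi
    rw [U_eq_ascentAvoiderSum (by grind)]
  rw [sum_Icc_two_eq_add_add _ hn, Finset.sum_congr rfl hsum, Nat.choose_self,
    Nat.choose_symm (by omega : 1 ≤ n), Nat.choose_one_right, Nat.sub_self,
    Nat.sub_sub_self (by omega : 1 ≤ n), ascentAvoiderSum_zero, ascentAvoiderSum_one]
  simp

theorem U_succ {n : ℕ} (hn : 3 ≤ n) :
    U (n + 1) = (1 + X) * U n + X * (n : ℚ[X]) * U (n - 1) +
      X * ∑ i ∈ Finset.Icc 2 (n - 2), (n.choose i : ℚ[X]) * U i * U (n - i) := by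
  have hsum : ∀ i ∈ Finset.Icc 2 n, (n.choose i : ℚ[X]) * ascentAvoiderSum X i *
      ascentAvoiderSum X (n - i) =
        (n.choose i : ℚ[X]) * U i * ascentAvoiderSum X (n - i) := by
    intro i hi
    rw [U_eq_ascentAvoiderSum (Finset.mem_Icc.1 hi).1]
  rw [U_eq_ascentAvoiderSum (by omega), ascentAvoiderSum_succ, Finset.sum_congr rfl hsum,
    sum_choose_mul_ascentAvoiderSum hn, ← U_eq_ascentAvoiderSum (by omega)]
  ring

theorem avoiderSum_X_eq_U_add_V {n : ℕ} (hn : 2 ≤ n) : avoiderSum X n = U n + V n := by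
  rw [← sum_avoidsC132_eq_avoiderSum, sum_avoidsC132_eq_U_add_V hn]

theorem U_add_V_succ {n : ℕ} (hn : 3 ≤ n) :
    U (n + 1) + V (n + 1) = U n + X * (n : ℚ[X]) * U (n - 1) +
      X * (∑ i ∈ Finset.Icc 2 (n - 2), (n.choose i : ℚ[X]) * (U i + V i) * U (n - i) +
        (n : ℚ[X]) * (U (n - 1) + V (n - 1)) + (U n + V n)) := by
  have hsum : ∀ i ∈ Finset.Icc 2 n, (n.choose i : ℚ[X]) * avoiderSum X i *
      ascentAvoiderSum X (n - i) =
        (n.choose i : ℚ[X]) * (U i + V i) * ascentAvoiderSum X (n - i) := by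
    intro i hi
    rw [avoiderSum_X_eq_U_add_V (Finset.mem_Icc.1 hi).1]
  rw [← avoiderSum_X_eq_U_add_V (by omega), avoiderSum_succ, Finset.sum_congr rfl hsum,
    sum_choose_mul_ascentAvoiderSum hn, avoiderSum_one, mul_one,
    ← U_eq_ascentAvoiderSum (by omega), ← U_eq_ascentAvoiderSum (by omega)]

theorem V_succ {n : ℕ} (hn : 3 ≤ n) :
    V (n + 1) = X * V n + X * (n : ℚ[X]) * V (n - 1) +
      X * (∑ i ∈ Finset.Icc 2 (n - 2), (n.choose i : ℚ[X]) * V i * U (n - i)) +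
      X * (n : ℚ[X]) * U (n - 1) := by
  have h := U_add_V_succ hn
  simp only [mul_add, add_mul, Finset.sum_add_distrib] at h
  linear_combination h - U_succ hn

end Recurrences

/-- For all `n ≥ 3`,
`U_{n+1} = (1+t)·U_n + t·n·U_{n−1} + t·∑_{i=2}^{n−2} C(n,i)·U_i·U_{n−i}` and
`V_{n+1} = t·V_n + t·n·V_{n−1} + t·∑_{i=2}^{n−2} C(n,i)·V_i·U_{n−i} + t·n·U_{n−1}`;
moreover, for all `n ≥ 2`, `∑_{π ∈ S_n(1̲3̲2)} t^{des(π)} = U_n + V_n`. -/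
theorem statement19 :
    (∀ n : ℕ, 3 ≤ n →
      U (n + 1) =
        (1 + Polynomial.X) * U n + Polynomial.X * (n : Polynomial ℚ) * U (n - 1) +
          Polynomial.X *
            ∑ i ∈ Finset.Icc 2 (n - 2), (n.choose i : Polynomial ℚ) * U i * U (n - i)) ∧
    (∀ n : ℕ, 3 ≤ n →
      V (n + 1) =
        Polynomial.X * V n + Polynomial.X * (n : Polynomial ℚ) * V (n - 1) +
          Polynomial.X *
            (∑ i ∈ Finset.Icc 2 (n - 2), (n.choose i : Polynomial ℚ) * V i * U (n - i)) +
          Polynomial.X * (n : Polynomial ℚ) * U (n - 1)) ∧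
    (∀ n : ℕ, 2 ≤ n →
      (∑ π ∈ Finset.univ.filter (fun π : Equiv.Perm (Fin n) => AvoidsC132 π),
          Polynomial.X ^ des π) = U n + V n) :=
  ⟨fun _ => U_succ, fun _ => V_succ, fun _ => sum_avoidsC132_eq_U_add_V⟩
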